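/- arXiv:1112.2427 — 2 statements merged into one kernel-verified Lean document; each statement's English description precedes it below -/
import Mathlib

section
/- Let K be a field of characteristic p > 0, let f ∈ m = (x_1,…,x_m) ⊆ K[x_1,…,x_m] and g ∈ n = (y_1,…,y_n) ⊆ K[y_1,…,y_n] be nonzero polynomials in disjoint sets of variables, and regard fg as an element of K[x_1,…,x_m,y_1,…,y_n]. If the F-pure threshold of f at m is λ_1 and the F-pure threshold of g at n is λ_2 (each expressed as the limit of ν/p^e), then the F-pure threshold of fg at m + n equals min(λ_1, λ_2); that is, ν_{fg}(p^e)/p^e (computed with respect to the ideal (x_1,…,x_m,y_1,…,y_n)) converges to min(λ_1, λ_2). -/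
/-!
The threshold of a product in disjoint variables is computed at every finite level: for `q = p ^ e`
one has `ν_{fg}(q) = min (ν_f(q)) (ν_g(q))`, and `min` is continuous.

The Frobenius power `m^[q]` is a monomial ideal, so a polynomial lies outside it exactly when some
monomial of its support has all exponents smaller than `q` (`mem_frobeniusPower_iff`). In the
product of `a(x)` and `b(y)` the coefficient of `x^α y^β` is `a_α b_β` (`coeff_rename_mul_rename`),
and a field has no zero divisors, so `a b ∉ (m + n)^[q]` if and only if `a ∉ m^[q]` and `b ∉ n^[q]`
(`rename_mul_rename_mem_iff`). With `a = f ^ l` and `b = g ^ l`, the set whose supremum is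
`ν_{fg}(q)` is the intersection of those of `f` and `g`. Both are initial segments of `ℕ`, bounded
by `q` because `f ^ q ∈ m^[q]` whenever `f ∈ m` (`pow_mem_frobeniusPower`), so the supremum of the
intersection is the smaller of the two suprema.
-/

/-- The `q`-th Frobenius power `m^[q]` of the maximal ideal generated by the variables. -/
noncomputable def frobeniusPower (K : Type*) [CommRing K] (σ : Type*) (q : ℕ) :
    Ideal (MvPolynomial σ K) :=
  Ideal.span (Set.range fun i : σ => (MvPolynomial.X i : MvPolynomial σ K) ^ q)

/-- `ν_f(q) = max { l : f ^ l ∉ m^[q] }`. -/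
noncomputable def nu {K : Type*} [CommRing K] {σ : Type*} (f : MvPolynomial σ K) (q : ℕ) : ℕ :=
  sSup {l : ℕ | f ^ l ∉ frobeniusPower K σ q}

open MvPolynomial

theorem mem_frobeniusPower_iff {K σ : Type*} [CommRing K] (q : ℕ) (f : MvPolynomial σ K) :
    f ∈ frobeniusPower K σ q ↔ ∀ d ∈ f.support, ∃ i, q ≤ d i := by
  have h : (Set.range fun i : σ => (X i : MvPolynomial σ K) ^ q) =
      (fun s => monomial s (1 : K)) '' Set.range (fun i : σ => Finsupp.single i q) := by
    rw [← Set.range_comp]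
    congr 1
    funext i
    simp [X_pow_eq_monomial]
  rw [frobeniusPower, h, mem_ideal_span_monomial_image]
  simp

/-- The coefficient of `x^α y^β` in `a(x) b(y)` is the product of the coefficients. -/
theorem coeff_rename_mul_rename {K σ τ : Type*} [CommRing K] (a : MvPolynomial σ K)
    (b : MvPolynomial τ K) (α : σ →₀ ℕ) (β : τ →₀ ℕ) :
    coeff (α.mapDomain Sum.inl + β.mapDomain Sum.inr)
      (rename (Sum.inl : σ → σ ⊕ τ) a * rename (Sum.inr : τ → σ ⊕ τ) b) =
      coeff α a * coeff β b := by
  classical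
  -- both sides are bilinear, so it suffices to treat monomials
  induction a using MvPolynomial.induction_on' with
  | add a₁ a₂ h₁ h₂ => simp only [map_add, add_mul, coeff_add, h₁, h₂]
  | monomial u r =>
    induction b using MvPolynomial.induction_on' with
    | add b₁ b₂ h₁ h₂ => simp only [map_add, mul_add, coeff_add, h₁, h₂]
    | monomial v s =>
      have key : (u.mapDomain (Sum.inl : σ → σ ⊕ τ) + v.mapDomain (Sum.inr : τ → σ ⊕ τ) =
          α.mapDomain Sum.inl + β.mapDomain Sum.inr) ↔ u = α ∧ v = β := by
        constructor
        · intro h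
          have hl (i : σ) := DFunLike.congr_fun h (Sum.inl i)
          have hr (i : τ) := DFunLike.congr_fun h (Sum.inr i)
          simp only [Finsupp.add_apply, Finsupp.mapDomain_apply Sum.inl_injective,
            Finsupp.mapDomain_apply Sum.inr_injective] at hl hr
          simp only [Finsupp.mapDomain_of_notMem_range, Set.mem_range, reduceCtorEq,
            exists_false, not_false_eq_true, add_zero, zero_add] at hl hr
          exact ⟨Finsupp.ext hl, Finsupp.ext hr⟩
        · rintro ⟨rfl, rfl⟩
          rfl
      simp only [rename_monomial, monomial_mul, coeff_monomial, key]
      by_cases hu : u = α <;> by_cases hv : v = β <;> simp [hu, hv]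

theorem rename_mem_frobeniusPower {K σ τ : Type*} [CommRing K] (j : σ → τ) (q : ℕ)
    {a : MvPolynomial σ K} (ha : a ∈ frobeniusPower K σ q) :
    rename j a ∈ frobeniusPower K τ q := by
  have h : frobeniusPower K σ q ≤ (frobeniusPower K τ q).comap (rename j) := by
    refine Ideal.span_le.2 ?_
    rintro _ ⟨i, rfl⟩
    simpa [frobeniusPower] using Ideal.subset_span
      (s := Set.range fun i : τ => (X i : MvPolynomial τ K) ^ q) ⟨j i, rfl⟩
  exact h ha

theorem rename_mul_rename_mem_iff {K σ τ : Type*} [Field K] (q : ℕ) (a : MvPolynomial σ K)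
    (b : MvPolynomial τ K) :
    rename (Sum.inl : σ → σ ⊕ τ) a * rename (Sum.inr : τ → σ ⊕ τ) b ∈
      frobeniusPower K (σ ⊕ τ) q ↔ a ∈ frobeniusPower K σ q ∨ b ∈ frobeniusPower K τ q := by
  constructor
  · intro h
    by_contra hab
    rw [not_or] at hab
    simp only [mem_frobeniusPower_iff, not_forall, not_exists, exists_prop] at hab
    obtain ⟨⟨α, hα, hα'⟩, ⟨β, hβ, hβ'⟩⟩ := hab
    rw [mem_support_iff] at hα hβ
    obtain ⟨i, hi⟩ := (mem_frobeniusPower_iff q _).1 h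
      (α.mapDomain Sum.inl + β.mapDomain Sum.inr) (by
        rw [mem_support_iff, coeff_rename_mul_rename]
        exact mul_ne_zero hα hβ)
    rcases i with i | i
    · apply hα' i
      simpa [Finsupp.mapDomain_apply Sum.inl_injective, Finsupp.mapDomain_of_notMem_range] using hi
    · apply hβ' i
      simpa [Finsupp.mapDomain_apply Sum.inr_injective, Finsupp.mapDomain_of_notMem_range] using hi
  · rintro (h | h)
    · exact Ideal.mul_mem_right _ _ (rename_mem_frobeniusPower _ q h)
    · exact Ideal.mul_mem_left _ _ (rename_mem_frobeniusPower _ q h)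

/-- The `e`-th iterate of Frobenius is a ring homomorphism sending each variable `x` to
`x ^ p ^ e`, hence it maps `m` into `m^[p ^ e]`. -/
theorem pow_mem_frobeniusPower {K σ : Type*} [Field K] (p : ℕ) [Fact p.Prime] [CharP K p]
    (e : ℕ) {f : MvPolynomial σ K}
    (hf : f ∈ Ideal.span (Set.range (X : σ → MvPolynomial σ K))) :
    f ^ p ^ e ∈ frobeniusPower K σ (p ^ e) := by
  have h : Ideal.span (Set.range (X : σ → MvPolynomial σ K)) ≤
      (frobeniusPower K σ (p ^ e)).comap (iterateFrobenius (MvPolynomial σ K) p e) := by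
    refine Ideal.span_le.2 ?_
    rintro _ ⟨i, rfl⟩
    exact Ideal.subset_span ⟨i, rfl⟩
  exact h hf

theorem sSup_inter_of_isLowerSet {s t : Set ℕ} (hs : IsLowerSet s) (ht : IsLowerSet t)
    (hsb : BddAbove s) (htb : BddAbove t) : sSup (s ∩ t) = min (sSup s) (sSup t) := by
  -- `csSup_le_csSup'` covers an empty set too, since `sSup ∅ = 0` is the least natural number
  rcases hs.total ht with h | h
  · rw [Set.inter_eq_left.2 h, min_eq_left (csSup_le_csSup' htb h)]
  · rw [Set.inter_eq_right.2 h, min_eq_right (csSup_le_csSup' hsb h)]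

theorem isLowerSet_pow_notMem {R : Type*} [CommRing R] (I : Ideal R) (f : R) :
    IsLowerSet {l : ℕ | f ^ l ∉ I} :=
  fun _ _ hkl hl hk => hl (I.pow_mem_of_pow_mem hk hkl)

theorem bddAbove_pow_notMem {R : Type*} [CommRing R] (I : Ideal R) {f : R} {k : ℕ}
    (hk : f ^ k ∈ I) : BddAbove {l : ℕ | f ^ l ∉ I} :=
  ⟨k, fun _ hl => le_of_not_ge fun hkl => hl (I.pow_mem_of_pow_mem hk hkl)⟩

theorem nu_rename_mul_rename {K σ τ : Type*} [Field K] (p : ℕ) [Fact p.Prime] [CharP K p]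
    (f : MvPolynomial σ K) (g : MvPolynomial τ K)
    (hf : f ∈ Ideal.span (Set.range (X : σ → MvPolynomial σ K)))
    (hg : g ∈ Ideal.span (Set.range (X : τ → MvPolynomial τ K))) (e : ℕ) :
    nu (rename (Sum.inl : σ → σ ⊕ τ) f * rename (Sum.inr : τ → σ ⊕ τ) g) (p ^ e) =
      min (nu f (p ^ e)) (nu g (p ^ e)) := by
  rw [nu, nu, nu, ← sSup_inter_of_isLowerSet (isLowerSet_pow_notMem _ f)
    (isLowerSet_pow_notMem _ g) (bddAbove_pow_notMem _ (pow_mem_frobeniusPower p e hf))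
    (bddAbove_pow_notMem _ (pow_mem_frobeniusPower p e hg))]
  congr 1
  ext l
  simp only [Set.mem_ofPred_eq, Set.mem_inter_iff, mul_pow, ← map_pow, rename_mul_rename_mem_iff,
    not_or]

theorem stmt_6 {K : Type*} [Field K] (p : ℕ) [Fact p.Prime] [CharP K p]
    {m n : ℕ} (f : MvPolynomial (Fin m) K) (g : MvPolynomial (Fin n) K)
    (hf0 : f ≠ 0) (hg0 : g ≠ 0)
    (hfm : f ∈ Ideal.span (Set.range (MvPolynomial.X : Fin m → MvPolynomial (Fin m) K)))
    (hgn : g ∈ Ideal.span (Set.range (MvPolynomial.X : Fin n → MvPolynomial (Fin n) K)))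
    (l1 l2 : ℝ)
    (h1 : Filter.Tendsto (fun e : ℕ => (nu f (p ^ e) : ℝ) / (p : ℝ) ^ e)
      Filter.atTop (nhds l1))
    (h2 : Filter.Tendsto (fun e : ℕ => (nu g (p ^ e) : ℝ) / (p : ℝ) ^ e)
      Filter.atTop (nhds l2)) :
    Filter.Tendsto (fun e : ℕ =>
        (nu (MvPolynomial.rename (Sum.inl : Fin m → Fin m ⊕ Fin n) f *
             MvPolynomial.rename (Sum.inr : Fin n → Fin m ⊕ Fin n) g) (p ^ e) : ℝ) / (p : ℝ) ^ e)
      Filter.atTop (nhds (min l1 l2)) := by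
  refine (h1.min h2).congr fun e => ?_
  have hp : (0 : ℝ) ≤ (p : ℝ) ^ e := by positivity
  rw [nu_rename_mul_rename p f g hfm hgn e, Nat.cast_min, min_div_div_right hp]
end

section
/- Fix a prime p. Let a, b ∈ ℕ^m with a ≠ b and a_i + b_i ≥ 1 for every i, and suppose the splitting polytope P has a unique maximal point η = (η_1, η_2) with η_1 + η_2 ≤ 1. Suppose L := sup{ N ∈ ℕ : η_1^(e) + η_2^(e) ≤ p−1 for all 1 ≤ e ≤ N } is finite, set d := max{ e ≤ L : η_1^(e) + η_2^(e) ≤ p−2 }, and suppose that (⟨η_1⟩_d + 1/p^d, ⟨η_2⟩_d) ∈ P°_lower or (⟨η_1⟩_d, ⟨η_2⟩_d + 1/p^d) ∈ P°_lower. Set ε := max{ δ ≥ 0 : (⟨η_1⟩_d + 1/p^d, ⟨η_2⟩_d + δ) ∈ P or (⟨η_1⟩_d + δ, ⟨η_2⟩_d + 1/p^d) ∈ P }. Then 0 < ε ≤ (η_1 + η_2) − ⟨η_1 + η_2⟩_L, and equality ε = (η_1 + η_2) − ⟨η_1 + η_2⟩_L holds if and only if p^d·η_1 ∈ ℕ or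 p^d·η_2 ∈ ℕ. -/
/-!
Write `T₁, T₂` for the `d`-th truncations of `η₁, η₂`.

The digit sums of `η₁, η₂` in the places `d + 1, …, L` are all equal to `p - 1`, so
`⟨η₁⟩_L + ⟨η₂⟩_L = T₁ + T₂ + 1 / p ^ d - 1 / p ^ L`, and the carry at place `L + 1` gives
`⟨η₁ + η₂⟩_L = ⟨η₁⟩_L + ⟨η₂⟩_L + 1 / p ^ L = T₁ + T₂ + 1 / p ^ d` (`trunc_eq_of_mem` pins the
truncation down by its defining half-open interval). Both candidate points defining `ε` therefore
have coordinate sum `⟨η₁ + η₂⟩_L + ε`, and the upper bound on `ε` is the maximality of `η`.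

In the case of equality the candidate point is itself maximal, hence equal to `η` by uniqueness,
so `ηᵢ = Tᵢ + 1 / p ^ d` for some `i`, which means that `p ^ d * ηᵢ` is an integer
(`eq_trunc_add_iff`). Conversely, if `η₁ = T₁ + 1 / p ^ d` then `δ = η₂ - T₂` is admissible and
attains the bound. Positivity of `ε` holds because the finitely many strict inequalities defining
the lower interior survive a small perturbation.
-/

/-- The splitting polytope of the pair of exponent vectors `a, b : Fin m → ℕ`. -/
def splittingPolytope {m : ℕ} (a b : Fin m → ℕ) : Set (ℝ × ℝ) :=
  {s | 0 ≤ s.1 ∧ 0 ≤ s.2 ∧ ∀ i, (a i : ℝ) * s.1 + (b i : ℝ) * s.2 ≤ 1}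

/-- The lower interior of the splitting polytope. -/
def lowerInterior {m : ℕ} (a b : Fin m → ℕ) : Set (ℝ × ℝ) :=
  {s | 0 ≤ s.1 ∧ 0 ≤ s.2 ∧ ∀ i, (a i : ℝ) * s.1 + (b i : ℝ) * s.2 < 1}

/-- `η` is a maximal point of the splitting polytope: it maximizes the coordinate sum. -/
def isMaxPoint {m : ℕ} (a b : Fin m → ℕ) (η : ℝ × ℝ) : Prop :=
  η ∈ splittingPolytope a b ∧ ∀ s ∈ splittingPolytope a b, s.1 + s.2 ≤ η.1 + η.2


/-- The `e`-th truncation of `α ∈ (0,1]` in base `p`; by convention `⟨0⟩ₑ = 0`. -/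
noncomputable def trunc (p e : ℕ) (α : ℝ) : ℝ :=
  if α = 0 then 0 else (⌈(p : ℝ) ^ e * α⌉ - 1) / (p : ℝ) ^ e

/-- The `e`-th digit (for `e ≥ 1`) of the non-terminating base-`p` expansion of `α`. -/
noncomputable def digit (p e : ℕ) (α : ℝ) : ℝ :=
  (p : ℝ) ^ e * (trunc p e α - trunc p (e - 1) α)

lemma trunc_zero (p e : ℕ) : trunc p e 0 = 0 := by simp [trunc]

lemma trunc_lt {p e : ℕ} (hp : 0 < p) {α : ℝ} (h : 0 < α) : trunc p e α < α := by
  have hq : (0 : ℝ) < (p : ℝ) ^ e := by positivity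
  rw [trunc, if_neg h.ne', div_lt_iff₀ hq]
  linarith [Int.ceil_lt_add_one ((p : ℝ) ^ e * α)]

lemma le_trunc_add {p e : ℕ} (hp : 0 < p) {α : ℝ} (h : 0 ≤ α) :
    α ≤ trunc p e α + 1 / (p : ℝ) ^ e := by
  have hq : (0 : ℝ) < (p : ℝ) ^ e := by positivity
  rcases h.eq_or_lt with rfl | h
  · rw [trunc_zero]; positivity
  · rw [trunc, if_neg h.ne', ← add_div, le_div_iff₀ hq]
    linarith [Int.le_ceil ((p : ℝ) ^ e * α)]

lemma exists_int_trunc {p : ℕ} (hp : 0 < p) (e : ℕ) (α : ℝ) :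
    ∃ k : ℤ, (p : ℝ) ^ e * trunc p e α = k := by
  have hq : (0 : ℝ) < (p : ℝ) ^ e := by positivity
  by_cases h : α = 0
  · exact ⟨0, by simp [h, trunc_zero]⟩
  · refine ⟨⌈(p : ℝ) ^ e * α⌉ - 1, ?_⟩
    rw [trunc, if_neg h]
    push_cast
    field_simp

/-- The `e`-th truncation is the unique `k / p ^ e` with `k` an integer and
`k < p ^ e * α ≤ k + 1`. -/
lemma trunc_eq_of_mem {p e : ℕ} (hp : 0 < p) {α t : ℝ} (h : 0 < α) {k : ℤ}
    (hk : (p : ℝ) ^ e * t = k) (h1 : t < α) (h2 : α ≤ t + 1 / (p : ℝ) ^ e) :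
    trunc p e α = t := by
  have hq : (0 : ℝ) < (p : ℝ) ^ e := by positivity
  have hc : ⌈(p : ℝ) ^ e * α⌉ = k + 1 := by
    rw [Int.ceil_eq_iff]
    push_cast
    rw [← hk]
    constructor
    · simpa using mul_lt_mul_of_pos_left h1 hq
    · have := mul_le_mul_of_nonneg_left h2 hq.le
      rwa [mul_add, mul_one_div_cancel hq.ne'] at this
  rw [trunc, if_neg h.ne', hc]
  push_cast
  rw [← hk]
  field_simp
  ring

lemma eq_trunc_add_iff {p e : ℕ} (hp : 0 < p) {α : ℝ} (h : 0 < α) :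
    α = trunc p e α + 1 / (p : ℝ) ^ e ↔ ∃ n : ℕ, (p : ℝ) ^ e * α = n := by
  have hq : (0 : ℝ) < (p : ℝ) ^ e := by positivity
  constructor
  · intro hα
    obtain ⟨k, hk⟩ := exists_int_trunc hp e α
    have h3 : (p : ℝ) ^ e * α = ((k + 1 : ℤ) : ℝ) := by
      conv_lhs => rw [hα, mul_add, hk, mul_one_div_cancel hq.ne']
      push_cast
      rfl
    have h4 : (0 : ℝ) < ((k + 1 : ℤ) : ℝ) := h3 ▸ mul_pos hq h
    lift k + 1 to ℕ using (by exact_mod_cast h4.le) with n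
    exact ⟨n, by simpa using h3⟩
  · rintro ⟨n, hn⟩
    rw [trunc, if_neg h.ne', hn, Int.ceil_natCast]
    push_cast
    rw [← hn]
    field_simp
    ring

lemma trunc_succ {p : ℕ} (hp : 0 < p) (e : ℕ) (α : ℝ) :
    trunc p (e + 1) α = trunc p e α + digit p (e + 1) α / (p : ℝ) ^ (e + 1) := by
  have hq : (0 : ℝ) < (p : ℝ) ^ (e + 1) := by positivity
  rw [digit, Nat.add_sub_cancel]
  field_simp
  ring

lemma exists_int_digit {p : ℕ} (hp : 0 < p) (e : ℕ) (α : ℝ) :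
    ∃ k : ℤ, digit p (e + 1) α = k := by
  obtain ⟨k, hk⟩ := exists_int_trunc hp e α
  obtain ⟨l, hl⟩ := exists_int_trunc hp (e + 1) α
  refine ⟨l - p * k, ?_⟩
  rw [digit, Nat.add_sub_cancel, mul_sub, hl, pow_succ']
  push_cast
  rw [← hk]
  ring

lemma digit_lt {p : ℕ} (hp : 0 < p) (e : ℕ) {α : ℝ} (h : 0 ≤ α) : digit p (e + 1) α < p := by
  have hp' : (0 : ℝ) < p := by positivity
  have hq : (0 : ℝ) < (p : ℝ) ^ e := by positivity
  rcases h.eq_or_lt with rfl | h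
  · simpa [digit, trunc_zero] using hp
  · have h1 := trunc_lt (e := e + 1) hp h
    have h2 := le_trunc_add (e := e) hp h.le
    rw [digit, Nat.add_sub_cancel]
    calc (p : ℝ) ^ (e + 1) * (trunc p (e + 1) α - trunc p e α)
        < (p : ℝ) ^ (e + 1) * (1 / (p : ℝ) ^ e) := by
          apply mul_lt_mul_of_pos_left _ (by positivity); linarith
      _ = p := by rw [pow_succ']; field_simp

/-- If the digit sums of `x` and `y` in the places `d + 1, …, e` all equal `p - 1`, the geometric
sum of the intermediate digits collapses. -/
lemma trunc_add_trunc {p : ℕ} (hp : 0 < p) {x y : ℝ} {d e : ℕ} (hde : d ≤ e)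
    (h : ∀ k, d < k → k ≤ e → digit p k x + digit p k y = (p : ℝ) - 1) :
    trunc p e x + trunc p e y =
      trunc p d x + trunc p d y + 1 / (p : ℝ) ^ d - 1 / (p : ℝ) ^ e := by
  induction e, hde using Nat.le_induction with
  | base => ring
  | succ e hde ih =>
    have ih := ih fun k h1 h2 => h k h1 (by omega)
    have hk := h (e + 1) (by omega) le_rfl
    have hp' : (0 : ℝ) < p := by positivity
    rw [trunc_succ hp, trunc_succ hp, add_add_add_comm, ih, ← add_div, hk, pow_succ]
    field_simp
    ring

/-- A carry out of place `L + 1` contributes exactly one unit in place `L`. -/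
lemma trunc_add_of_carry {p L : ℕ} (hp : 0 < p) {x y : ℝ} (hx : 0 < x) (hy : 0 < y)
    (h : (p : ℝ) ≤ digit p (L + 1) x + digit p (L + 1) y) :
    trunc p L (x + y) = trunc p L x + trunc p L y + 1 / (p : ℝ) ^ L := by
  have hp' : (0 : ℝ) < p := by positivity
  have hq : (0 : ℝ) < (p : ℝ) ^ L := by positivity
  obtain ⟨k, hk⟩ := exists_int_trunc hp L x
  obtain ⟨l, hl⟩ := exists_int_trunc hp L y
  refine trunc_eq_of_mem hp (add_pos hx hy) (k := k + l + 1) ?_ ?_ ?_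
  · push_cast
    rw [mul_add, mul_add, hk, hl, mul_one_div_cancel hq.ne']
  · have h1 := trunc_lt (e := L + 1) hp hx
    have h2 := trunc_lt (e := L + 1) hp hy
    have h3 : 1 / (p : ℝ) ^ L ≤
        digit p (L + 1) x / (p : ℝ) ^ (L + 1) + digit p (L + 1) y / (p : ℝ) ^ (L + 1) := by
      rw [← add_div, le_div_iff₀ (by positivity), pow_succ]
      field_simp
      linarith
    rw [trunc_succ hp] at h1 h2
    linarith
  · linarith [le_trunc_add (e := L) hp hx.le, le_trunc_add (e := L) hp hy.le]

/-- A point of the lower interior can be moved a little along any direction without violating the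
linear constraints `aᵢ s₁ + bᵢ s₂ ≤ 1`. -/
lemma exists_pos_perturb {m : ℕ} {a b : Fin m → ℕ} {s : ℝ × ℝ} (hs : s ∈ lowerInterior a b)
    (u v : ℝ) : ∃ δ : ℝ, 0 < δ ∧
      ∀ i, (a i : ℝ) * (s.1 + δ * u) + (b i : ℝ) * (s.2 + δ * v) ≤ 1 := by
  have key : ∀ᶠ δ : ℝ in nhdsWithin 0 (Set.Ioi 0),
      ∀ i, (a i : ℝ) * (s.1 + δ * u) + (b i : ℝ) * (s.2 + δ * v) ≤ 1 := by
    rw [Filter.eventually_all]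
    intro i
    have hc : Continuous fun δ : ℝ => (a i : ℝ) * (s.1 + δ * u) + (b i : ℝ) * (s.2 + δ * v) := by
      fun_prop
    have h0 := (hc.tendsto 0).eventually_lt_const (u := 1) (by simpa using hs.2.2 i)
    exact (h0.filter_mono nhdsWithin_le_nhds).mono fun _ h => h.le
  obtain ⟨δ, hδ, hpos⟩ := (key.and self_mem_nhdsWithin).exists
  exact ⟨δ, hpos, hδ⟩

theorem stmt_16 (p : ℕ) (hp : p.Prime)
    {m : ℕ} (a b : Fin m → ℕ) (hab : a ≠ b) (hvar : ∀ i, 1 ≤ a i + b i)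
    (η : ℝ × ℝ) (hη : isMaxPoint a b η) (huniq : ∀ s, isMaxPoint a b s → s = η)
    (hsum : η.1 + η.2 ≤ 1) (L : ℕ)
    (hL1 : ∀ e : ℕ, 1 ≤ e → e ≤ L → digit p e η.1 + digit p e η.2 ≤ (p : ℝ) - 1)
    (hL2 : (p : ℝ) ≤ digit p (L + 1) η.1 + digit p (L + 1) η.2)
    (d : ℕ) (hd1 : 1 ≤ d) (hdL : d ≤ L)
    (hd2 : digit p d η.1 + digit p d η.2 ≤ (p : ℝ) - 2)
    (hdmax : ∀ e : ℕ, 1 ≤ e → e ≤ L →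
      digit p e η.1 + digit p e η.2 ≤ (p : ℝ) - 2 → e ≤ d)
    (hlow : (trunc p d η.1 + 1 / (p : ℝ) ^ d, trunc p d η.2) ∈ lowerInterior a b ∨
            (trunc p d η.1, trunc p d η.2 + 1 / (p : ℝ) ^ d) ∈ lowerInterior a b)
    (ε : ℝ) (hε0 : 0 ≤ ε)
    (hεmem : (trunc p d η.1 + 1 / (p : ℝ) ^ d, trunc p d η.2 + ε) ∈ splittingPolytope a b ∨
             (trunc p d η.1 + ε, trunc p d η.2 + 1 / (p : ℝ) ^ d) ∈ splittingPolytope a b)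
    (hεmax : ∀ δ : ℝ, 0 ≤ δ →
      ((trunc p d η.1 + 1 / (p : ℝ) ^ d, trunc p d η.2 + δ) ∈ splittingPolytope a b ∨
       (trunc p d η.1 + δ, trunc p d η.2 + 1 / (p : ℝ) ^ d) ∈ splittingPolytope a b) →
      δ ≤ ε) :
    0 < ε ∧ ε ≤ (η.1 + η.2) - trunc p L (η.1 + η.2) ∧
      (ε = (η.1 + η.2) - trunc p L (η.1 + η.2) ↔
        (∃ n : ℕ, (p : ℝ) ^ d * η.1 = n) ∨ (∃ n : ℕ, (p : ℝ) ^ d * η.2 = n)) := by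
  have hp0 : 0 < p := hp.pos
  obtain ⟨⟨hη1, hη2, hηc⟩, hηmax⟩ := hη
  -- A vanishing coordinate would force a single digit to be at least `p`.
  have hpos1 : 0 < η.1 := by
    refine hη1.lt_of_ne fun h => ?_
    have := digit_lt hp0 L hη2
    rw [← h] at hL2
    simp only [digit, trunc_zero] at hL2 this
    linarith
  have hpos2 : 0 < η.2 := by
    refine hη2.lt_of_ne fun h => ?_
    have := digit_lt hp0 L hη1
    rw [← h] at hL2
    simp only [digit, trunc_zero] at hL2 this
    linarith
  have hdig : ∀ k, d < k → k ≤ L → digit p k η.1 + digit p k η.2 = (p : ℝ) - 1 := by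
    intro k hk hkL
    refine le_antisymm (hL1 k (by omega) hkL) ?_
    by_contra! hlt
    have hnot : ¬ digit p k η.1 + digit p k η.2 ≤ (p : ℝ) - 2 := fun h =>
      absurd (hdmax k (by omega) hkL h) (by omega)
    apply hnot
    obtain ⟨k, rfl⟩ := Nat.exists_eq_succ_of_ne_zero (by omega : k ≠ 0)
    obtain ⟨u, hu⟩ := exists_int_digit hp0 k η.1
    obtain ⟨v, hv⟩ := exists_int_digit hp0 k η.2
    simp only [Nat.succ_eq_add_one, hu, hv] at hlt ⊢
    have h1 : u + v < (p : ℤ) - 1 := by exact_mod_cast hlt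
    have h2 : u + v ≤ (p : ℤ) - 2 := by omega
    exact_mod_cast h2
  have hT : trunc p L (η.1 + η.2) = trunc p d η.1 + trunc p d η.2 + 1 / (p : ℝ) ^ d := by
    rw [trunc_add_of_carry hp0 hpos1 hpos2 hL2, trunc_add_trunc hp0 hdL hdig]
    ring
  rw [← eq_trunc_add_iff hp0 hpos1, ← eq_trunc_add_iff hp0 hpos2, hT]
  refine ⟨?_, ?_, ?_, ?_⟩
  · rcases hlow with h | h
    · obtain ⟨δ, hδ, hδP⟩ := exists_pos_perturb h 0 1
      refine hδ.trans_le (hεmax δ hδ.le (Or.inl ⟨h.1, add_nonneg h.2.1 hδ.le, fun i => ?_⟩))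
      simpa using hδP i
    · obtain ⟨δ, hδ, hδP⟩ := exists_pos_perturb h 1 0
      refine hδ.trans_le (hεmax δ hδ.le (Or.inr ⟨add_nonneg h.1 hδ.le, h.2.1, fun i => ?_⟩))
      simpa using hδP i
  · rcases hεmem with h | h
    · have := hηmax _ h
      dsimp only at this
      linarith
    · have := hηmax _ h
      dsimp only at this
      linarith
  · intro heq
    rcases hεmem with h | h
    · left
      have hm := huniq _ ⟨h, fun s hs => (hηmax s hs).trans (by dsimp only; linarith)⟩
      exact (congrArg Prod.fst hm).symm
    · right
      have hm := huniq _ ⟨h, fun s hs => (hηmax s hs).trans (by dsimp only; linarith)⟩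
      exact (congrArg Prod.snd hm).symm
  · intro h
    apply le_antisymm
    · rcases hεmem with h | h
      · have := hηmax _ h
        dsimp only at this
        linarith
      · have := hηmax _ h
        dsimp only at this
        linarith
    · rcases h with h | h
      -- In either case `η` itself is one of the two candidate points.
      · have := hεmax (η.2 - trunc p d η.2) (by linarith [trunc_lt (e := d) hp0 hpos2])
          (Or.inl (by rw [← h, add_sub_cancel]; exact ⟨hη1, hη2, hηc⟩))
        linarith
      · have := hεmax (η.1 - trunc p d η.1) (by linarith [trunc_lt (e := d) hp0 hpos1])
          (Or.inr (by rw [← h, add_sub_cancel]; exact ⟨hη1, hη2, hηc⟩))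
        linarith
end
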